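/- Let Ω ⊆ ℝ³ be open, μ > 0 and λ ∈ ℝ constants, and let u : Ω → ℝ³, r_s : Ω → ℝ³ and ω : Ω → ℝ^{3×3} be differentiable fields. Define the Cauchy stress σ = 2μ(∇u + S*r_s) + λ(∇·u)I and assume the angular momentum balance ∇·ω = S(μ^{-1}σ) holds on Ω (divergence of matrix fields taken row-wise). Then the total rotation τ = (1/2)ω + S*u satisfies ∇·τ = 2 r_s on Ω; equivalently, with r = 2μ r_s, one has ∇·τ = μ^{-1} r. -/

import Mathlib

open Matrix

attribute [local instance] Matrix.normedAddCommGroup Matrix.normedSpace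

/-- The asymmetry operator `S : ℝ^{3×3} → ℝ³`, `S(σ)ᵢ = σ_{i-1,i+1} - σ_{i+1,i-1}`
(indices modulo 3). -/
noncomputable def Sop (σ : Matrix (Fin 3) (Fin 3) ℝ) : Fin 3 → ℝ :=
  fun i => σ (i - 1) (i + 1) - σ (i + 1) (i - 1)

/-- The adjoint `S* : ℝ³ → ℝ^{3×3}`, sending `r` to the skew matrix with rows
`(0, -r₃, r₂)`, `(r₃, 0, -r₁)`, `(-r₂, r₁, 0)`. -/
noncomputable def Sstar (r : Fin 3 → ℝ) : Matrix (Fin 3) (Fin 3) ℝ :=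
  !![0, -r 2, r 1; r 2, 0, -r 0; -r 1, r 0, 0]

/-- The Jacobian matrix `(∇u(x))_{ij} = ∂ⱼuᵢ(x)` of a vector field on `ℝ³`. -/
noncomputable def jac (u : (Fin 3 → ℝ) → (Fin 3 → ℝ)) (x : Fin 3 → ℝ) :
    Matrix (Fin 3) (Fin 3) ℝ :=
  fun i j => fderiv ℝ u x (Pi.single j 1) i

/-- The divergence `∇·u = Σᵢ ∂ᵢuᵢ` of a vector field on `ℝ³`. -/
noncomputable def divVec (u : (Fin 3 → ℝ) → (Fin 3 → ℝ)) (x : Fin 3 → ℝ) : ℝ :=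
  ∑ i, fderiv ℝ u x (Pi.single i 1) i

/-- The row-wise divergence `(∇·M)ᵢ = Σⱼ ∂ⱼ M_{ij}` of a matrix field on `ℝ³`. -/
noncomputable def divMat (M : (Fin 3 → ℝ) → Matrix (Fin 3) (Fin 3) ℝ) (x : Fin 3 → ℝ) :
    Fin 3 → ℝ :=
  fun i => ∑ j, fderiv ℝ (fun y => M y i j) x (Pi.single j 1)

/-- Componentwise differentiation of a differentiable vector field. -/
lemma fderiv_component {u : (Fin 3 → ℝ) → (Fin 3 → ℝ)} {x : Fin 3 → ℝ}
    (hu : DifferentiableAt ℝ u x) (i j : Fin 3) :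
    fderiv ℝ (fun y => u y i) x (Pi.single j 1) = jac u x i j := by
  rw [fderiv_apply hu i]
  rfl

lemma divMat_add {M N : (Fin 3 → ℝ) → Matrix (Fin 3) (Fin 3) ℝ} {x : Fin 3 → ℝ}
    (hM : ∀ i j, DifferentiableAt ℝ (fun y => M y i j) x)
    (hN : ∀ i j, DifferentiableAt ℝ (fun y => N y i j) x) :
    divMat (fun y => M y + N y) x = divMat M x + divMat N x := by
  ext i
  simp only [divMat, Matrix.add_apply, Pi.add_apply, ← Finset.sum_add_distrib]
  refine Finset.sum_congr rfl fun j _ => ?_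
  rw [fderiv_fun_add (hM i j) (hN i j)]
  rfl

lemma divMat_const_smul {M : (Fin 3 → ℝ) → Matrix (Fin 3) (Fin 3) ℝ} {x : Fin 3 → ℝ}
    (c : ℝ) (hM : ∀ i j, DifferentiableAt ℝ (fun y => M y i j) x) :
    divMat (fun y => c • M y) x = c • divMat M x := by
  ext i
  simp only [divMat, Matrix.smul_apply, Pi.smul_apply, Finset.smul_sum]
  refine Finset.sum_congr rfl fun j _ => ?_
  rw [fderiv_fun_const_smul (hM i j)]
  rfl

lemma differentiableAt_Sstar_apply {u : (Fin 3 → ℝ) → (Fin 3 → ℝ)} {x : Fin 3 → ℝ}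
    (hu : DifferentiableAt ℝ u x) (i j : Fin 3) :
    DifferentiableAt ℝ (fun y => Sstar (u y) i j) x := by
  have h := differentiableAt_pi.1 hu
  fin_cases i <;> fin_cases j <;> simp [Sstar, h]

/-- The divergence of `S*u` is minus the curl of `u`, i.e. `-S(∇u)`. -/
lemma divMat_Sstar {u : (Fin 3 → ℝ) → (Fin 3 → ℝ)} {x : Fin 3 → ℝ}
    (hu : DifferentiableAt ℝ u x) :
    divMat (fun y => Sstar (u y)) x = -Sop (jac u x) := by
  have hneg : (-1 : Fin 3) = 2 := rfl
  ext i
  fin_cases i <;>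
    simp [divMat, Sstar, Sop, hneg, Fin.sum_univ_three, fderiv_fun_neg,
      fderiv_component hu] <;>
    ring

lemma Sop_add (A B : Matrix (Fin 3) (Fin 3) ℝ) : Sop (A + B) = Sop A + Sop B := by
  ext i
  simp only [Sop, Matrix.add_apply, Pi.add_apply]
  ring

lemma Sop_smul (c : ℝ) (A : Matrix (Fin 3) (Fin 3) ℝ) : Sop (c • A) = c • Sop A := by
  ext i
  simp only [Sop, Matrix.smul_apply, Pi.smul_apply, smul_eq_mul]
  ring

lemma Sop_one : Sop 1 = 0 := by
  ext i
  have h : i - 1 ≠ i + 1 := by decide +revert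
  simp [Sop, Matrix.one_apply_ne h, Matrix.one_apply_ne h.symm]

lemma Sop_Sstar (r : Fin 3 → ℝ) : Sop (Sstar r) = (2 : ℝ) • r := by
  ext i
  fin_cases i <;> simp [Sop, Sstar] <;> ring

/-- Let `Ω ⊆ ℝ³` be open, `μ > 0`, `λ ∈ ℝ`, and let `u`, `r_s`, `ω` be differentiable
fields on `Ω`.  With the Cauchy stress `σ = 2μ(∇u + S*r_s) + λ(∇·u)I` and the angular
momentum balance `∇·ω = S(μ⁻¹σ)` on `Ω`, the total rotation `τ = (1/2)ω + S*u`
satisfies `∇·τ = 2 r_s` on `Ω`; equivalently, with `r = 2μ r_s`, `∇·τ = μ⁻¹ r`. -/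
theorem div_total_rotation (Ω : Set (Fin 3 → ℝ)) (hΩ : IsOpen Ω) (μ lam : ℝ) (hμ : 0 < μ)
    (u rs : (Fin 3 → ℝ) → (Fin 3 → ℝ)) (ω : (Fin 3 → ℝ) → Matrix (Fin 3) (Fin 3) ℝ)
    (hu : ∀ x ∈ Ω, DifferentiableAt ℝ u x)
    (hrs : ∀ x ∈ Ω, DifferentiableAt ℝ rs x)
    (hω : ∀ x ∈ Ω, DifferentiableAt ℝ ω x)
    (σ : (Fin 3 → ℝ) → Matrix (Fin 3) (Fin 3) ℝ)
    (hσ : ∀ x ∈ Ω, σ x = (2 * μ) • (jac u x + Sstar (rs x)) +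
      (lam * divVec u x) • (1 : Matrix (Fin 3) (Fin 3) ℝ))
    (hbal : ∀ x ∈ Ω, divMat ω x = Sop ((1 / μ) • σ x)) :
    ∀ x ∈ Ω,
      divMat (fun y => (1 / 2 : ℝ) • ω y + Sstar (u y)) x = (2 : ℝ) • rs x ∧
      divMat (fun y => (1 / 2 : ℝ) • ω y + Sstar (u y)) x = (1 / μ) • ((2 * μ) • rs x) := by
  intro x hx
  have hω' : ∀ i j, DifferentiableAt ℝ (fun y => ω y i j) x := fun i j =>
    differentiableAt_pi.1 (differentiableAt_pi.1 (hω x hx) i) j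
  have hdiv : divMat (fun y => (1 / 2 : ℝ) • ω y + Sstar (u y)) x = (2 : ℝ) • rs x := by
    rw [divMat_add (M := fun y => (1 / 2 : ℝ) • ω y)
        (fun i j => (hω' i j).const_smul (1 / 2 : ℝ))
        (differentiableAt_Sstar_apply (hu x hx)),
      divMat_const_smul _ hω', divMat_Sstar (hu x hx), hbal x hx, hσ x hx]
    simp only [Sop_add, Sop_smul, Sop_one, Sop_Sstar]
    ext i
    simp only [Pi.add_apply, Pi.smul_apply, Pi.neg_apply, Pi.zero_apply, smul_eq_mul]
    field_simp
    ring
  refine ⟨hdiv, hdiv.trans ?_⟩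
  rw [smul_smul]
  congr 1
  field_simp
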